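/- arXiv:2405.08140 — 4 statements merged into one kernel-verified Lean document; each statement's English description precedes it below -/
import Mathlib

section
/- Let α > −1 and β > −1 be real numbers and define τ_k := Γ(β+1)·(2k+α+β+1)·Γ(k+α+1)·Γ(k+α+β+1)/(Γ(α+1)·Γ(α+β+2)·Γ(k+1)·Γ(k+β+1)) for k = 0, 1, 2, …. Then the ratio (∑_{k=0}^{m} τ_k) / ( (Γ(β+1)/(Γ(α+2)·Γ(α+β+2))) · m^{2α+2} ) tends to 1 as m → ∞. -/
open Real Filter Finset

lemma aux_prod (t : ℝ) (ht : 0 < t) (n : ℕ) :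
    Real.Gamma ((n : ℝ) + t) = Real.Gamma t * ∏ j ∈ Finset.range n, (t + (j : ℝ)) := by
  induction n with
  | zero => simp
  | succ n ih =>
    have h : ((n + 1 : ℕ) : ℝ) + t = ((n : ℝ) + t) + 1 := by push_cast; ring
    rw [h, Real.Gamma_add_one (by positivity), ih, Finset.prod_range_succ]
    ring

lemma aux_gamma (t : ℝ) (ht : 0 < t) :
    Tendsto (fun n : ℕ => Real.Gamma ((n : ℝ) + t) / ((n.factorial : ℝ) * (n : ℝ) ^ (t - 1)))
      atTop (nhds 1) := by
  have hG := Real.Gamma_pos_of_pos ht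
  have h1 := (Real.GammaSeq_tendsto_Gamma t).inv₀ hG.ne'
  have h2 : Tendsto (fun n : ℕ => (n : ℝ) / ((n : ℝ) + t)) atTop (nhds 1) :=
    tendsto_natCast_div_add_atTop t
  have h3 := (h1.const_mul (Real.Gamma t)).mul h2
  rw [mul_inv_cancel₀ hG.ne', one_mul] at h3
  refine h3.congr' ?_
  filter_upwards [eventually_gt_atTop 0] with n hn
  have hn' : (0 : ℝ) < n := by exact_mod_cast hn
  have hf : (0 : ℝ) < n.factorial := by exact_mod_cast n.factorial_pos
  have hp : (0 : ℝ) < (n : ℝ) ^ t := Real.rpow_pos_of_pos hn' t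
  have hP : 0 < ∏ j ∈ Finset.range n, (t + (j : ℝ)) :=
    Finset.prod_pos fun j _ => by positivity
  rw [aux_prod t ht n, Real.GammaSeq, Finset.prod_range_succ, Real.rpow_sub_one hn'.ne']
  have : t + (n : ℝ) ≠ 0 := by positivity
  have : (n : ℝ) + t ≠ 0 := by positivity
  field_simp
  ring

lemma aux_step (α β : ℝ) (hα : -1 < α) (hβ : -1 < β) (x : ℝ) (hx : 0 < x)
    (hab : 0 < x + α + β + 1) :
    Real.Gamma (β + 1) * Real.Gamma (x + α + 1) * Real.Gamma (x + α + β + 1) /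
        (Real.Gamma (α + 2) * Real.Gamma (α + β + 2) * Real.Gamma x * Real.Gamma (x + β)) +
      Real.Gamma (β + 1) * (2 * x + α + β + 1) * Real.Gamma (x + α + 1) *
        Real.Gamma (x + α + β + 1) /
        (Real.Gamma (α + 1) * Real.Gamma (α + β + 2) * Real.Gamma (x + 1) *
          Real.Gamma (x + β + 1)) = 
    Real.Gamma (β + 1) * Real.Gamma (x + α + 2) * Real.Gamma (x + α + β + 2) /
        (Real.Gamma (α + 2) * Real.Gamma (α + β + 2) * Real.Gamma (x + 1) *
          Real.Gamma (x + β + 1)) ∨ x + β ≤ 0 := by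
  by_cases hxb : x + β ≤ 0
  · exact Or.inr hxb
  left
  push Not at hxb
  have ha : 0 < α + 1 := by linarith
  have hxa : 0 < x + α + 1 := by linarith
  rw [show α + 2 = (α + 1) + 1 by ring, show x + α + 2 = (x + α + 1) + 1 by ring,
    show x + α + β + 2 = (x + α + β + 1) + 1 by ring, Real.Gamma_add_one ha.ne',
    Real.Gamma_add_one hx.ne', Real.Gamma_add_one hxb.ne', Real.Gamma_add_one hxa.ne',
    Real.Gamma_add_one hab.ne']
  have g1 := (Real.Gamma_pos_of_pos ha).ne'
  have g2 := (Real.Gamma_pos_of_pos hx).ne'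
  have g3 := (Real.Gamma_pos_of_pos hxb).ne'
  have g4 := (Real.Gamma_pos_of_pos (show 0 < α + β + 2 by linarith)).ne'
  have := ha.ne'
  have := hx.ne'
  have := hxb.ne'
  field_simp
  ring


theorem dim_Vm_strong_equivalence (α β : ℝ) (hα : -1 < α) (hβ : -1 < β)
    (τ : ℕ → ℝ)
    (hτ : ∀ k : ℕ, τ k =
      Real.Gamma (β + 1) * (2 * (k : ℝ) + α + β + 1) * Real.Gamma ((k : ℝ) + α + 1) *
        Real.Gamma ((k : ℝ) + α + β + 1) /
        (Real.Gamma (α + 1) * Real.Gamma (α + β + 2) * Real.Gamma ((k : ℝ) + 1) *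
          Real.Gamma ((k : ℝ) + β + 1))) :
    Filter.Tendsto
      (fun m : ℕ =>
        (∑ k ∈ Finset.range (m + 1), τ k) /
          ((Real.Gamma (β + 1) / (Real.Gamma (α + 2) * Real.Gamma (α + β + 2))) *
            (m : ℝ) ^ (2 * α + 2)))
      Filter.atTop (nhds 1) := by
  set C : ℝ := Real.Gamma (β + 1) / (Real.Gamma (α + 2) * Real.Gamma (α + β + 2)) with hC
  have g1 := Real.Gamma_pos_of_pos (show 0 < β + 1 by linarith)
  have g2 := Real.Gamma_pos_of_pos (show 0 < α + 2 by linarith)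
  have g3 := Real.Gamma_pos_of_pos (show 0 < α + β + 2 by linarith)
  have hCpos : 0 < C := by positivity
  have hsum : ∀ m : ℕ, ∑ k ∈ Finset.range (m + 1), τ k = (τ 0 - 1) +
      Real.Gamma (β + 1) * Real.Gamma ((m : ℝ) + α + 2) * Real.Gamma ((m : ℝ) + α + β + 2) /
        (Real.Gamma (α + 2) * Real.Gamma (α + β + 2) * Real.Gamma ((m : ℝ) + 1) *
          Real.Gamma ((m : ℝ) + β + 1)) := by
    intro m
    induction m with
    | zero =>
      simp only [zero_add, Finset.sum_range_one, Nat.cast_zero, Real.Gamma_one]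
      field_simp
      ring
    | succ m ih =>
      rw [Finset.sum_range_succ, ih, hτ (m + 1), add_assoc]
      have hm : (0 : ℝ) ≤ m := Nat.cast_nonneg m
      rcases aux_step α β hα hβ ((m + 1 : ℕ) : ℝ) (by push_cast; linarith)
        (by push_cast; linarith) with h | h
      · rw [← h]
        push_cast
        congr 5 <;> ring_nf
      · push_cast at h
        linarith
  have hpow : Tendsto (fun m : ℕ => (m : ℝ) ^ (2 * α + 2)) atTop atTop :=
    (tendsto_rpow_atTop (by linarith)).comp tendsto_natCast_atTop_atTop
  have hz : Tendsto (fun m : ℕ => (τ 0 - 1) / (C * (m : ℝ) ^ (2 * α + 2))) atTop (nhds 0) :=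
    (hpow.const_mul_atTop hCpos).const_div_atTop _
  have hmain := ((aux_gamma (α + 2) (by linarith)).mul
    (aux_gamma (α + β + 2) (by linarith))).div (aux_gamma (β + 1) (by linarith)) one_ne_zero
  have hfin := hz.add hmain
  norm_num only at hfin
  refine hfin.congr' ?_
  filter_upwards [eventually_gt_atTop 0] with m hm
  have hm' : (0 : ℝ) < m := by exact_mod_cast hm
  have hf : (0 : ℝ) < m.factorial := by exact_mod_cast m.factorial_pos
  have g4 := Real.Gamma_pos_of_pos (show 0 < (m : ℝ) + β + 1 by linarith)
  simp only [Pi.div_apply]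
  rw [hsum m, add_div, Real.Gamma_nat_eq_factorial]
  have e : (m : ℝ) ^ (α + 2 - 1) * (m : ℝ) ^ (α + β + 2 - 1) =
      (m : ℝ) ^ (2 * α + 2) * (m : ℝ) ^ (β + 1 - 1) := by
    rw [← Real.rpow_add hm', ← Real.rpow_add hm']
    ring_nf
  have p1 := Real.rpow_pos_of_pos hm' (α + 2 - 1)
  have p2 := Real.rpow_pos_of_pos hm' (α + β + 2 - 1)
  have p3 := Real.rpow_pos_of_pos hm' (2 * α + 2)
  have p4 := Real.rpow_pos_of_pos hm' (β + 1 - 1)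
  rw [show (m : ℝ) + (α + 2) = m + α + 2 by ring,
    show (m : ℝ) + (α + β + 2) = m + α + β + 2 by ring,
    show (m : ℝ) + (β + 1) = m + β + 1 by ring, hC]
  congr 1
  generalize (m : ℝ) ^ (α + 2 - 1) = a at *
  generalize (m : ℝ) ^ (α + β + 2 - 1) = b at *
  generalize (m : ℝ) ^ (2 * α + 2) = c at *
  generalize (m : ℝ) ^ (β + 1 - 1) = d at *
  rw [div_mul_div_comm, show (m.factorial : ℝ) * a * (m.factorial * b) =
    m.factorial * m.factorial * (c * d) by rw [← e]; ring]
  field_simp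
end

section
/- Let α > −1 and β > −1 be real numbers and for m = 1, 2, … define b_m := (m+1)·(β+m+1)·(m+α+2)^{m+α+3/2}·(m+α+β+2)^{m+α+β+3/2} / ( (m+2)^{m+3/2}·(m+β+2)^{m+β+3/2} ). Then the ratio b_m / ( e^{2α}·m^{2α+2} ) tends to 1 as m → ∞. -/
open Real Filter

lemma tendsto_one_add_div_aux (c : ℝ) :
    Tendsto (fun m : ℕ => 1 + c / (m : ℝ)) atTop (nhds 1) := by
  have h : Tendsto (fun m : ℕ => c / (m : ℝ)) atTop (nhds 0) :=
    tendsto_const_nhds.div_atTop tendsto_natCast_atTop_atTop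
  simpa using h.const_add 1

lemma pow_ratio_aux (c d : ℝ) :
    Tendsto (fun m : ℕ => ((m : ℝ) + c) ^ ((m : ℝ) + d) / (m : ℝ) ^ ((m : ℝ) + d))
      atTop (nhds (Real.exp c)) := by
  have h1 := tendsto_one_add_div_aux c
  have h2 : Tendsto (fun m : ℕ => (m : ℝ) * Real.log (1 + c / (m : ℝ))) atTop (nhds c) :=
    (Real.tendsto_mul_log_one_add_div_atTop c).comp tendsto_natCast_atTop_atTop
  have h3 : Tendsto (fun m : ℕ => d * Real.log (1 + c / (m : ℝ))) atTop (nhds 0) := by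
    have := (h1.log one_ne_zero).const_mul d
    simpa using this
  have h4 := (Real.continuous_exp.tendsto _).comp (h2.add h3)
  rw [add_zero] at h4
  refine h4.congr' ?_
  filter_upwards [h1.eventually (lt_mem_nhds one_pos), eventually_ge_atTop 1] with m hm hm1
  have hmpos : (0 : ℝ) < m := by exact_mod_cast hm1
  have e : (m : ℝ) + c = m * (1 + c / m) := by field_simp
  rw [e, Real.mul_rpow hmpos.le hm.le, mul_div_cancel_left₀ _ (Real.rpow_pos_of_pos hmpos _).ne',
    Real.rpow_def_of_pos hm]
  simp only [Function.comp]
  congr 1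
  ring

theorem bm_strong_equivalence (α β : ℝ) (hα : -1 < α) (hβ : -1 < β)
    (b : ℕ → ℝ)
    (hb : ∀ m : ℕ, 1 ≤ m → b m =
      ((m : ℝ) + 1) * (β + (m : ℝ) + 1) *
        ((m : ℝ) + α + 2) ^ ((m : ℝ) + α + 3 / 2) *
        ((m : ℝ) + α + β + 2) ^ ((m : ℝ) + α + β + 3 / 2) /
        (((m : ℝ) + 2) ^ ((m : ℝ) + 3 / 2) * ((m : ℝ) + β + 2) ^ ((m : ℝ) + β + 3 / 2))) :
    Filter.Tendsto
      (fun m : ℕ => b m / (Real.exp (2 * α) * (m : ℝ) ^ (2 * α + 2)))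
      Filter.atTop (nhds 1) := by
  have hA := pow_ratio_aux (α + 2) (α + 3 / 2)
  have hB := pow_ratio_aux (α + β + 2) (α + β + 3 / 2)
  have hC := pow_ratio_aux 2 (3 / 2)
  have hD := pow_ratio_aux (β + 2) (β + 3 / 2)
  have hE := tendsto_one_add_div_aux 1
  have hF := tendsto_one_add_div_aux (β + 1)
  have key := (((hE.mul hF).mul (hA.mul hB)).div (hC.mul hD)
    (mul_ne_zero (Real.exp_pos _).ne' (Real.exp_pos _).ne')).div_const (Real.exp (2 * α))
  have hlim : 1 * 1 * (Real.exp (α + 2) * Real.exp (α + β + 2)) /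
      (Real.exp 2 * Real.exp (β + 2)) / Real.exp (2 * α) = 1 := by
    rw [div_div, ← Real.exp_add, ← Real.exp_add, ← Real.exp_add, one_mul, one_mul,
      ← Real.exp_sub, Real.exp_eq_one_iff]
    ring
  rw [hlim] at key
  refine key.congr' ?_
  filter_upwards [eventually_ge_atTop 1] with m hm
  have hmpos : (0 : ℝ) < m := by exact_mod_cast hm
  have hm1 : (1 : ℝ) ≤ m := by exact_mod_cast hm
  rw [hb m hm]
  have hpow : (m : ℝ) ^ ((m : ℝ) + (α + 3 / 2)) * (m : ℝ) ^ ((m : ℝ) + (α + β + 3 / 2)) * (m * m)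
      = (m : ℝ) ^ (2 * α + 2) * ((m : ℝ) ^ ((m : ℝ) + 3 / 2) *
        (m : ℝ) ^ ((m : ℝ) + (β + 3 / 2))) := by
    have : (m : ℝ) * m = (m : ℝ) ^ (2 : ℝ) := by
      rw [Real.rpow_two]; ring
    rw [this]
    simp only [← Real.rpow_add hmpos]
    congr 1
    ring
  have e1 : 1 + 1 / (m : ℝ) = (m + 1) / m := by field_simp
  have e2 : 1 + (β + 1) / (m : ℝ) = (β + m + 1) / m := by field_simp; ring
  simp only [Pi.div_apply, Pi.mul_apply, e1, e2]
  simp only [← add_assoc] at hpow ⊢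
  have p1 := Real.rpow_pos_of_pos hmpos ((m : ℝ) + α + 3 / 2)
  have p2 := Real.rpow_pos_of_pos hmpos ((m : ℝ) + α + β + 3 / 2)
  have p3 := Real.rpow_pos_of_pos hmpos ((m : ℝ) + 3 / 2)
  have p4 := Real.rpow_pos_of_pos hmpos ((m : ℝ) + β + 3 / 2)
  have p5 := Real.rpow_pos_of_pos hmpos (2 * α + 2)
  have p6 := Real.rpow_pos_of_pos (show (0 : ℝ) < m + 2 by linarith) ((m : ℝ) + 3 / 2)
  have p7 := Real.rpow_pos_of_pos (show (0 : ℝ) < m + β + 2 by linarith) ((m : ℝ) + β + 3 / 2)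
  have p8 := Real.exp_pos (2 * α)
  generalize (m : ℝ) ^ ((m : ℝ) + α + 3 / 2) = x1 at *
  generalize (m : ℝ) ^ ((m : ℝ) + α + β + 3 / 2) = x2 at *
  generalize (m : ℝ) ^ ((m : ℝ) + 3 / 2) = x3 at *
  generalize (m : ℝ) ^ ((m : ℝ) + β + 3 / 2) = x4 at *
  generalize (m : ℝ) ^ (2 * α + 2) = x5 at *
  generalize ((m : ℝ) + 2) ^ ((m : ℝ) + 3 / 2) = x6 at *
  generalize ((m : ℝ) + β + 2) ^ ((m : ℝ) + β + 3 / 2) = x7 at *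
  generalize ((m : ℝ) + α + 2) ^ ((m : ℝ) + α + 3 / 2) = y1 at *
  generalize ((m : ℝ) + α + β + 2) ^ ((m : ℝ) + α + β + 3 / 2) = y2 at *
  generalize Real.exp (2 * α) = x8 at *
  generalize (m : ℝ) = M at *
  have l : (M + 1) / M * ((β + M + 1) / M) * (y1 / x1 * (y2 / x2)) / (x6 / x3 * (x7 / x4)) / x8
      = (M + 1) * (β + M + 1) * y1 * y2 * (x3 * x4) / (x6 * x7 * x8 * (x1 * x2 * (M * M))) := by
    field_simp
  rw [l, hpow]
  field_simp
end

section
/- Let ϱ > 0 be real, d ≥ 2 an integer, and define λ_k^ϱ := e^{−2/ϱ²}·ϱ^{d−1}·Γ((d+1)/2)·I_{k+(d−1)/2}(2/ϱ²) for k = 0, 1, 2, …, where I_ν(z) := ∑_{j=0}^{∞} (z/2)^{ν+2j}/(j!·Γ(j+ν+1)) is the modified Bessel function of the first kind. Then for every k ≥ 0 one has ϱ²·(k+(d+1)/2)·λ_{k+1}^ϱ < λ_k^ϱ. -/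
open Real

/-- The modified Bessel function of the first kind, defined by its power series. -/
noncomputable def modifiedBesselI (ν z : ℝ) : ℝ :=
  ∑' j : ℕ, (z / 2) ^ (ν + 2 * (j : ℝ)) / ((Nat.factorial j : ℝ) * Real.Gamma ((j : ℝ) + ν + 1))

lemma gamma_shift_ge (ν : ℝ) (hν : 0 ≤ ν) (j : ℕ) :
    Real.Gamma (ν + 1) ≤ Real.Gamma ((j : ℝ) + ν + 1) := by
  induction j with
  | zero => simp
  | succ n ih =>
    have hn : (0 : ℝ) ≤ n := Nat.cast_nonneg n
    have h : Real.Gamma (((n + 1 : ℕ) : ℝ) + ν + 1) = (n + ν + 1) * Real.Gamma (n + ν + 1) := by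
      rw [← Real.Gamma_add_one (by positivity)]
      push_cast
      ring_nf
    have hg : 0 < Real.Gamma (n + ν + 1) := Real.Gamma_pos_of_pos (by positivity)
    rw [h]
    nlinarith [mul_nonneg (add_nonneg hn hν) hg.le]

lemma bessel_summable (ν x : ℝ) (hν : 0 ≤ ν) (hx : 0 < x) :
    Summable fun j : ℕ =>
      x ^ (ν + 2 * (j : ℝ)) / ((Nat.factorial j : ℝ) * Real.Gamma ((j : ℝ) + ν + 1)) := by
  have hs := (Real.summable_pow_div_factorial (x ^ 2)).mul_left (x ^ ν / Real.Gamma (ν + 1))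
  have hg : 0 < Real.Gamma (ν + 1) := Real.Gamma_pos_of_pos (by positivity)
  refine Summable.of_nonneg_of_le (fun j => ?_) (fun j => ?_) hs
  · have : 0 < Real.Gamma ((j : ℝ) + ν + 1) := Real.Gamma_pos_of_pos (by positivity)
    positivity
  · have h1 : x ^ (ν + 2 * (j : ℝ)) = x ^ ν * (x ^ 2) ^ j := by
      rw [Real.rpow_add hx, ← pow_mul, ← Real.rpow_natCast x (2 * j)]
      push_cast
      rfl
    have h2 : x ^ ν / Real.Gamma (ν + 1) * ((x ^ 2) ^ j / (Nat.factorial j : ℝ))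
        = x ^ ν * (x ^ 2) ^ j / ((Nat.factorial j : ℝ) * Real.Gamma (ν + 1)) := by
      field_simp
    rw [h1, h2]
    have := gamma_shift_ge ν hν j
    gcongr

lemma bessel_ineq (ν z : ℝ) (hν : 0 ≤ ν) (hz : 0 < z) :
    (ν + 1) * modifiedBesselI (ν + 1) z < z / 2 * modifiedBesselI ν z := by
  unfold modifiedBesselI
  have hx : 0 < z / 2 := by positivity
  generalize z / 2 = x at hx
  rw [← tsum_mul_left, ← tsum_mul_left]
  have key : ∀ j : ℕ, (ν + 1) * (x ^ (ν + 1 + 2 * (j : ℝ)) /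
        ((Nat.factorial j : ℝ) * Real.Gamma ((j : ℝ) + (ν + 1) + 1)))
      = (ν + 1) / (j + ν + 1) * (x * (x ^ (ν + 2 * (j : ℝ)) /
        ((Nat.factorial j : ℝ) * Real.Gamma ((j : ℝ) + ν + 1)))) := by
    intro j
    have hp : (0 : ℝ) < j + ν + 1 := by positivity
    have hg : 0 < Real.Gamma ((j : ℝ) + ν + 1) := Real.Gamma_pos_of_pos hp
    have e1 : Real.Gamma ((j : ℝ) + (ν + 1) + 1) = (j + ν + 1) * Real.Gamma (j + ν + 1) := by
      rw [← Real.Gamma_add_one hp.ne']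
      ring_nf
    have e2 : x ^ (ν + 1 + 2 * (j : ℝ)) = x * x ^ (ν + 2 * (j : ℝ)) := by
      rw [show ν + 1 + 2 * (j : ℝ) = 1 + (ν + 2 * (j : ℝ)) by ring, Real.rpow_add hx,
        Real.rpow_one]
    rw [e1, e2]
    field_simp
  have hpos : ∀ j : ℕ, 0 < x * (x ^ (ν + 2 * (j : ℝ)) /
        ((Nat.factorial j : ℝ) * Real.Gamma ((j : ℝ) + ν + 1))) := by
    intro j
    have hg : 0 < Real.Gamma ((j : ℝ) + ν + 1) := Real.Gamma_pos_of_pos (by positivity)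
    positivity
  refine Summable.tsum_lt_tsum (i := 1) (fun j => ?_) ?_
    ((bessel_summable (ν + 1) x (by positivity) hx).mul_left _)
    ((bessel_summable ν x hν hx).mul_left _)
  · rw [key]
    refine mul_le_of_le_one_left (hpos j).le ?_
    rw [div_le_one (by positivity)]
    have : (0 : ℝ) ≤ j := Nat.cast_nonneg j
    linarith
  · rw [key]
    refine mul_lt_of_lt_one_left (hpos 1) ?_
    rw [div_lt_one (by positivity)]
    push_cast
    linarith

theorem gaussian_coefficient_inequality (ϱ : ℝ) (hϱ : 0 < ϱ) (d : ℕ) (hd : 2 ≤ d)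
    (lam : ℕ → ℝ)
    (hlam : ∀ k : ℕ, lam k =
      Real.exp (-2 / ϱ ^ 2) * ϱ ^ (d - 1) * Real.Gamma (((d : ℝ) + 1) / 2) *
        modifiedBesselI ((k : ℝ) + ((d : ℝ) - 1) / 2) (2 / ϱ ^ 2)) :
    ∀ k : ℕ, ϱ ^ 2 * ((k : ℝ) + ((d : ℝ) + 1) / 2) * lam (k + 1) < lam k := by
  intro k
  have hd' : (2 : ℝ) ≤ d := by exact_mod_cast hd
  have hk : (0 : ℝ) ≤ k := Nat.cast_nonneg k
  have h := bessel_ineq ((k : ℝ) + ((d : ℝ) - 1) / 2) (2 / ϱ ^ 2) (by linarith) (by positivity)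
  rw [hlam, hlam]
  have e : ((k + 1 : ℕ) : ℝ) + ((d : ℝ) - 1) / 2 = (k : ℝ) + ((d : ℝ) - 1) / 2 + 1 := by
    push_cast
    ring
  have e' : (k : ℝ) + ((d : ℝ) + 1) / 2 = (k : ℝ) + ((d : ℝ) - 1) / 2 + 1 := by ring
  rw [e, e']
  have hg : 0 < Real.Gamma (((d : ℝ) + 1) / 2) := Real.Gamma_pos_of_pos (by positivity)
  have hC : 0 < Real.exp (-2 / ϱ ^ 2) * ϱ ^ (d - 1) * Real.Gamma (((d : ℝ) + 1) / 2) := by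
    positivity
  generalize Real.exp (-2 / ϱ ^ 2) * ϱ ^ (d - 1) * Real.Gamma (((d : ℝ) + 1) / 2) = C at hC
  generalize modifiedBesselI ((k : ℝ) + ((d : ℝ) - 1) / 2 + 1) (2 / ϱ ^ 2) = A at h ⊢
  generalize modifiedBesselI ((k : ℝ) + ((d : ℝ) - 1) / 2) (2 / ϱ ^ 2) = B at h ⊢
  have h2 := mul_lt_mul_of_pos_left h (mul_pos hC (pow_pos hϱ 2))
  have e3 : C * ϱ ^ 2 * (2 / ϱ ^ 2 / 2 * B) = C * B := by
    field_simp
  rw [e3] at h2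
  linarith
end

section
/- Let ϱ > 0 be real, d ≥ 2 an integer, define λ_k^ϱ := e^{−2/ϱ²}·ϱ^{d−1}·Γ((d+1)/2)·I_{k+(d−1)/2}(2/ϱ²) with I_ν(z) := ∑_{j=0}^{∞} (z/2)^{ν+2j}/(j!·Γ(j+ν+1)), and define τ_k^d := (2k+d−1)·(k+d−2)!/(k!·(d−1)!) for k = 0, 1, 2, …. Then for every k ≥ 0 one has λ_{k+1}^ϱ·τ_{k+1}^d < (2/ϱ²)·((k+d−1)/((2k+d−1)(k+1)))·λ_k^ϱ·τ_k^d; in particular, the Schoenberg coefficients a_k := λ_k^ϱ·τ_k^d of the spherical Gaussian kernel satisfy a_{k+1} < (2/ϱ²)·a_k. -/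
open Real

lemma aux_gamma_ge (ν : ℝ) (hν : 0 < ν) (j : ℕ) :
    Real.Gamma (ν + 1) ≤ Real.Gamma ((j : ℝ) + ν + 1) := by
  induction j with
  | zero => simp
  | succ n ih =>
    have hn : (0 : ℝ) ≤ n := Nat.cast_nonneg n
    have h1 : ((n + 1 : ℕ) : ℝ) + ν + 1 = ((n : ℝ) + ν + 1) + 1 := by push_cast; ring
    rw [h1, Real.Gamma_add_one (s := (n : ℝ) + ν + 1) (by positivity)]
    have hp : 0 < Real.Gamma ((n : ℝ) + ν + 1) := Real.Gamma_pos_of_pos (by positivity)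
    exact ih.trans (le_mul_of_one_le_left hp.le (by linarith))

lemma aux_pos (ν z : ℝ) (hν : 0 < ν) (hz : 0 < z) (j : ℕ) :
    0 < (z / 2) ^ (ν + 2 * (j : ℝ)) /
      ((Nat.factorial j : ℝ) * Real.Gamma ((j : ℝ) + ν + 1)) := by
  have hp : 0 < Real.Gamma ((j : ℝ) + ν + 1) := Real.Gamma_pos_of_pos (by positivity)
  positivity

lemma aux_summable (ν z : ℝ) (hν : 0 < ν) (hz : 0 < z) :
    Summable (fun j : ℕ => (z / 2) ^ (ν + 2 * (j : ℝ)) /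
      ((Nat.factorial j : ℝ) * Real.Gamma ((j : ℝ) + ν + 1))) := by
  have hs := (Real.summable_pow_div_factorial ((z / 2) ^ 2)).mul_left
    ((z / 2) ^ ν / Real.Gamma (ν + 1))
  refine Summable.of_nonneg_of_le (fun j => (aux_pos ν z hν hz j).le) (fun j => ?_) hs
  have hg : 0 < Real.Gamma (ν + 1) := Real.Gamma_pos_of_pos (by positivity)
  have hge := aux_gamma_ge ν hν j
  have hz2 : 0 < z / 2 := by positivity
  have e : (z / 2) ^ (ν + 2 * (j : ℝ)) = (z / 2) ^ ν * ((z / 2) ^ 2) ^ j := by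
    rw [Real.rpow_add hz2, ← pow_mul]
    congr 1
    rw [← Real.rpow_natCast]
    push_cast
    rfl
  rw [e]
  calc (z / 2) ^ ν * ((z / 2) ^ 2) ^ j / ((Nat.factorial j : ℝ) * Real.Gamma ((j : ℝ) + ν + 1))
      ≤ (z / 2) ^ ν * ((z / 2) ^ 2) ^ j / ((Nat.factorial j : ℝ) * Real.Gamma (ν + 1)) := by
        gcongr
    _ = _ := by field_simp

lemma aux_bessel_pos (ν z : ℝ) (hν : 0 < ν) (hz : 0 < z) : 0 < modifiedBesselI ν z :=
  (aux_summable ν z hν hz).tsum_pos (fun j => (aux_pos ν z hν hz j).le) 0 (aux_pos ν z hν hz 0)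

lemma aux_term (ν z : ℝ) (hν : 0 < ν) (hz : 0 < z) (j : ℕ) :
    (z / 2) ^ (ν + 1 + 2 * (j : ℝ)) /
      ((Nat.factorial j : ℝ) * Real.Gamma ((j : ℝ) + (ν + 1) + 1)) =
    (z / 2) / ((j : ℝ) + ν + 1) * ((z / 2) ^ (ν + 2 * (j : ℝ)) /
      ((Nat.factorial j : ℝ) * Real.Gamma ((j : ℝ) + ν + 1))) := by
  have hz2 : 0 < z / 2 := by positivity
  have h0 : (0 : ℝ) < (j : ℝ) + ν + 1 := by positivity
  have hp : 0 < Real.Gamma ((j : ℝ) + ν + 1) := Real.Gamma_pos_of_pos h0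
  have e1 : ν + 1 + 2 * (j : ℝ) = (ν + 2 * (j : ℝ)) + 1 := by ring
  have e2 : (j : ℝ) + (ν + 1) + 1 = ((j : ℝ) + ν + 1) + 1 := by ring
  rw [e1, e2, Real.Gamma_add_one h0.ne', Real.rpow_add_one hz2.ne']
  generalize (z / 2) ^ (ν + 2 * (j : ℝ)) = A
  field_simp

lemma aux_bessel_lt (ν z : ℝ) (hν : 0 < ν) (hz : 0 < z) :
    modifiedBesselI (ν + 1) z < (z / 2) / (ν + 1) * modifiedBesselI ν z := by
  unfold modifiedBesselI
  rw [← tsum_mul_left]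
  refine Summable.tsum_lt_tsum (i := 1) (fun j => ?_) ?_
    (aux_summable (ν + 1) z (by positivity) hz) ((aux_summable ν z hν hz).mul_left _)
  · rw [aux_term ν z hν hz j]
    refine mul_le_mul_of_nonneg_right ?_ (aux_pos ν z hν hz j).le
    have hj : (0 : ℝ) ≤ j := Nat.cast_nonneg j
    exact div_le_div_of_nonneg_left (by positivity) (by positivity) (by linarith)
  · rw [aux_term ν z hν hz 1]
    refine mul_lt_mul_of_pos_right ?_ (aux_pos ν z hν hz 1)
    exact div_lt_div_of_pos_left (by positivity) (by positivity) (by push_cast; linarith)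

theorem gaussian_schoenberg_coefficient_inequality (ϱ : ℝ) (hϱ : 0 < ϱ) (d : ℕ) (hd : 2 ≤ d)
    (lam : ℕ → ℝ)
    (hlam : ∀ k : ℕ, lam k =
      Real.exp (-2 / ϱ ^ 2) * ϱ ^ (d - 1) * Real.Gamma (((d : ℝ) + 1) / 2) *
        modifiedBesselI ((k : ℝ) + ((d : ℝ) - 1) / 2) (2 / ϱ ^ 2))
    (τ : ℕ → ℝ)
    (hτ : ∀ k : ℕ, τ k =
      (2 * (k : ℝ) + (d : ℝ) - 1) * (Nat.factorial (k + d - 2) : ℝ) /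
        ((Nat.factorial k : ℝ) * (Nat.factorial (d - 1) : ℝ)))
    (a : ℕ → ℝ) (ha : ∀ k : ℕ, a k = lam k * τ k) :
    ∀ k : ℕ,
      lam (k + 1) * τ (k + 1) <
        2 / ϱ ^ 2 * (((k : ℝ) + (d : ℝ) - 1) / ((2 * (k : ℝ) + (d : ℝ) - 1) * ((k : ℝ) + 1))) *
          (lam k * τ k) ∧
      a (k + 1) < 2 / ϱ ^ 2 * a k := by
  intro k
  have hd' : (2 : ℝ) ≤ d := by exact_mod_cast hd
  have hk : (0 : ℝ) ≤ k := Nat.cast_nonneg k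
  have hz : 0 < 2 / ϱ ^ 2 := by positivity
  have hν : 0 < (k : ℝ) + ((d : ℝ) - 1) / 2 := by linarith
  have hB := aux_bessel_lt _ _ hν hz
  have hBp := aux_bessel_pos _ _ hν hz
  have hG : 0 < Real.Gamma (((d : ℝ) + 1) / 2) := Real.Gamma_pos_of_pos (by positivity)
  have hC : 0 < Real.exp (-2 / ϱ ^ 2) * ϱ ^ (d - 1) * Real.Gamma (((d : ℝ) + 1) / 2) := by
    positivity
  have hm : 0 < 2 * (k : ℝ) + (d : ℝ) - 1 := by linarith
  have hp : 0 < 2 * (k : ℝ) + (d : ℝ) + 1 := by linarith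
  have hq : 0 < (k : ℝ) + (d : ℝ) - 1 := by linarith
  have hlp : 0 < lam k := by rw [hlam]; exact mul_pos hC hBp
  have hτp : 0 < τ k := by rw [hτ]; positivity
  have hl : lam (k + 1) < 2 / ϱ ^ 2 / (2 * (k : ℝ) + (d : ℝ) + 1) * lam k := by
    rw [hlam, hlam]
    have e : ((k + 1 : ℕ) : ℝ) + ((d : ℝ) - 1) / 2 = (k : ℝ) + ((d : ℝ) - 1) / 2 + 1 := by
      push_cast; ring
    have e2 : 2 / ϱ ^ 2 / 2 / ((k : ℝ) + ((d : ℝ) - 1) / 2 + 1) =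
        2 / ϱ ^ 2 / (2 * (k : ℝ) + (d : ℝ) + 1) := by
      rw [div_div]; congr 1; ring
    rw [e2] at hB
    rw [e]
    have := mul_lt_mul_of_pos_left hB hC
    linarith
  have ht : τ (k + 1) = (2 * (k : ℝ) + (d : ℝ) + 1) * (((k : ℝ) + (d : ℝ) - 1) /
      ((2 * (k : ℝ) + (d : ℝ) - 1) * ((k : ℝ) + 1))) * τ k := by
    rw [hτ, hτ]
    have e : k + 1 + d - 2 = (k + d - 2) + 1 := by omega
    have e3 : ((k + d - 2 : ℕ) : ℝ) = (k : ℝ) + d - 2 := by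
      rw [Nat.cast_sub (by omega)]; push_cast; ring
    rw [e, Nat.factorial_succ, Nat.factorial_succ]
    push_cast
    rw [e3]
    have hm' := hm.ne'
    field_simp
    ring
  have hR : 0 < ((k : ℝ) + (d : ℝ) - 1) / ((2 * (k : ℝ) + (d : ℝ) - 1) * ((k : ℝ) + 1)) := by
    positivity
  have hR1 : ((k : ℝ) + (d : ℝ) - 1) / ((2 * (k : ℝ) + (d : ℝ) - 1) * ((k : ℝ) + 1)) ≤ 1 := by
    rw [div_le_one (by positivity)]
    nlinarith
  have main : lam (k + 1) * τ (k + 1) <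
        2 / ϱ ^ 2 * (((k : ℝ) + (d : ℝ) - 1) / ((2 * (k : ℝ) + (d : ℝ) - 1) * ((k : ℝ) + 1))) *
          (lam k * τ k) := by
    rw [ht]
    generalize ((k : ℝ) + (d : ℝ) - 1) / ((2 * (k : ℝ) + (d : ℝ) - 1) * ((k : ℝ) + 1)) = R at *
    have h := mul_lt_mul_of_pos_right hl (mul_pos (mul_pos hp hR) hτp)
    refine h.trans_eq ?_
    field_simp
  refine ⟨main, ?_⟩
  rw [ha, ha]
  refine main.trans_le ?_
  refine mul_le_mul_of_nonneg_right ?_ (mul_pos hlp hτp).le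
  exact mul_le_of_le_one_right hz.le hR1
end
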